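/- Let d(l) denote the number of divisors of l and suppose the Salié sum bound |S_χ(n,n;l)| ≤ d(l) l^{1/2} gcd(n,l)^{1/2} holds for odd l, and the generalized Kloosterman sum bound |H_c(n,n)| ≤ 2^{ν+2}|S_χ(n',n';l)| for c = 2^ν l with l odd. Then for k → ∞ and a fundamental discriminant D, the sum Σ_{1 ≤ c ≤ 100|D|/k} c^{−1} |H_c(|D|,|D|)| · |J_{k−1/2}(π|D|/c)| ≪ (1 + √|D|/k) (k|D|)^ε, using the bound J_ν(x) ≪ ν^{−1/4}(|x−ν| + ν^{1/3})^{−1/4} for x ≫ ν. -/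

import Mathlib

open Finset

/-- The divisor bound `d(n) ≪ n ^ δ`. -/
theorem exists_card_divisors_le_mul_rpow (δ : ℝ) (hδ : 0 < δ) :
    ∃ C : ℝ, 1 ≤ C ∧ ∀ n : ℕ, n ≠ 0 → (n.divisors.card : ℝ) ≤ C * (n : ℝ) ^ δ := by
  have hlog : 0 < δ * Real.log 2 := mul_pos hδ (Real.log_pos one_lt_two)
  set K : ℝ := 1 + (δ * Real.log 2)⁻¹ with hK
  have hK1 : 1 ≤ K := by
    have := inv_pos.2 hlog
    linarith
  set P : ℕ := ⌈(2 : ℝ) ^ (1 / δ)⌉₊ with hP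
  refine ⟨K ^ P, one_le_pow₀ hK1, fun n hn => ?_⟩
  have hfac : ∀ p ∈ n.primeFactors, ((n.factorization p + 1 : ℕ) : ℝ) ≤
      (if p < P then K else 1) * ((p : ℝ) ^ δ) ^ n.factorization p := by
    intro p hp
    have hp2 : (2 : ℝ) ≤ p := by exact_mod_cast (Nat.prime_of_mem_primeFactors hp).two_le
    generalize n.factorization p = e
    split_ifs with hpP
    · have h1 : 1 + δ * Real.log 2 * e ≤ ((p : ℝ) ^ δ) ^ e := by
        calc 1 + δ * Real.log 2 * e ≤ Real.exp (δ * Real.log 2 * e) := by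
              linarith [Real.add_one_le_exp (δ * Real.log 2 * e)]
          _ = ((2 : ℝ) ^ δ) ^ e := by
              rw [Real.rpow_def_of_pos two_pos, ← Real.exp_nat_mul]
              ring_nf
          _ ≤ ((p : ℝ) ^ δ) ^ e := by gcongr
      calc ((e + 1 : ℕ) : ℝ) ≤ K * (1 + δ * Real.log 2 * e) := by
            have h2 : (δ * Real.log 2)⁻¹ * (δ * Real.log 2 * e) = e := by
              field_simp
            have h3 := mul_nonneg hlog.le (Nat.cast_nonneg (α := ℝ) e)
            have h4 := inv_pos.2 hlog
            rw [hK]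
            push_cast
            linarith
        _ ≤ K * ((p : ℝ) ^ δ) ^ e := by gcongr
    · have h1 : (2 : ℝ) ≤ (p : ℝ) ^ δ := by
        have h2 : (2 : ℝ) ^ (1 / δ) ≤ p :=
          (Nat.le_ceil _).trans (by exact_mod_cast not_lt.1 hpP)
        calc (2 : ℝ) = ((2 : ℝ) ^ (1 / δ)) ^ δ := by
              rw [← Real.rpow_mul two_pos.le, one_div_mul_cancel hδ.ne', Real.rpow_one]
          _ ≤ (p : ℝ) ^ δ := by gcongr
      rw [one_mul]
      calc ((e + 1 : ℕ) : ℝ) ≤ 2 ^ e := by exact_mod_cast Nat.lt_two_pow_self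
        _ ≤ ((p : ℝ) ^ δ) ^ e := by gcongr
  have hconst : ∏ p ∈ n.primeFactors, (if p < P then K else 1) ≤ K ^ P := by
    rw [← Finset.prod_filter, Finset.prod_const]
    refine pow_le_pow_right₀ hK1 ?_
    calc (n.primeFactors.filter (· < P)).card ≤ (Finset.range P).card :=
          Finset.card_le_card fun p hp => by simpa using (Finset.mem_filter.1 hp).2
      _ = P := Finset.card_range P
  have hpow : ∏ p ∈ n.primeFactors, ((p : ℝ) ^ δ) ^ n.factorization p = (n : ℝ) ^ δ := by
    conv_rhs => rw [← Nat.prod_factorization_pow_eq_self hn]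
    rw [Finsupp.prod, Nat.support_factorization, Nat.cast_prod,
      ← Real.finsetProd_rpow _ _ (fun _ _ => by positivity)]
    refine Finset.prod_congr rfl fun p _ => ?_
    push_cast
    rw [← Real.rpow_natCast, ← Real.rpow_natCast, ← Real.rpow_mul (by positivity),
      ← Real.rpow_mul (by positivity), mul_comm]
  rw [Nat.card_divisors hn, Nat.cast_prod]
  calc ∏ p ∈ n.primeFactors, ((n.factorization p + 1 : ℕ) : ℝ)
      ≤ ∏ p ∈ n.primeFactors, ((if p < P then K else 1) * ((p : ℝ) ^ δ) ^ n.factorization p) :=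
        Finset.prod_le_prod (fun _ _ => by positivity) hfac
    _ = (∏ p ∈ n.primeFactors, (if p < P then K else 1)) * (n : ℝ) ^ δ := by
        rw [Finset.prod_mul_distrib, hpow]
    _ ≤ K ^ P * (n : ℝ) ^ δ := by gcongr

theorem inv_sqrt_succ_le (j : ℕ) :
    (√((j + 1 : ℕ) : ℝ))⁻¹ ≤ 2 * √((j + 1 : ℕ) : ℝ) - 2 * √(j : ℝ) := by
  have h1 : 0 < √((j + 1 : ℕ) : ℝ) := Real.sqrt_pos.2 (by positivity)
  have h2 : √((j + 1 : ℕ) : ℝ) ^ 2 = (j : ℝ) + 1 := by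
    rw [Real.sq_sqrt (by positivity)]; push_cast; rfl
  have h3 : √(j : ℝ) ^ 2 = j := Real.sq_sqrt (by positivity)
  rw [inv_le_iff_one_le_mul₀ h1]
  nlinarith [sq_nonneg (√((j + 1 : ℕ) : ℝ) - √(j : ℝ))]

/-- Here `m - a` is truncated, and the terms with `m ≤ a` vanish. -/
theorem sum_inv_sqrt_sub_le (a N : ℕ) :
    ∑ m ∈ Finset.Icc 1 N, (√((m - a : ℕ) : ℝ))⁻¹ ≤ 2 * √(N : ℝ) := by
  suffices h : ∑ m ∈ Finset.Icc 1 N, (√((m - a : ℕ) : ℝ))⁻¹ ≤ 2 * √((N - a : ℕ) : ℝ) by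
    refine h.trans ?_
    gcongr
    exact Nat.sub_le N a
  induction N with
  | zero => simp
  | succ N ih =>
    rw [Finset.sum_Icc_succ_top (by omega)]
    rcases le_or_gt (N + 1) a with h | h
    · rw [Nat.sub_eq_zero_of_le (by omega : N ≤ a)] at ih
      rw [Nat.sub_eq_zero_of_le h]
      simpa using ih
    · have h1 := inv_sqrt_succ_le (N - a)
      rw [show N - a + 1 = N + 1 - a by omega] at h1
      linarith

/-- Here `a - m` is truncated, and the terms with `a ≤ m` vanish. -/
theorem sum_inv_sqrt_sub_le' (a N : ℕ) :
    ∑ m ∈ Finset.Icc 1 N, (√((a - m : ℕ) : ℝ))⁻¹ ≤ 2 * √(a : ℝ) := by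
  suffices h : ∑ m ∈ Finset.Icc 1 N, (√((a - m : ℕ) : ℝ))⁻¹ + 2 * √((a - N - 1 : ℕ) : ℝ) ≤
      2 * √(a : ℝ) by
    have := Real.sqrt_nonneg ((a - N - 1 : ℕ) : ℝ)
    linarith
  induction N with
  | zero =>
    simp only [Nat.lt_add_one, Finset.Icc_eq_empty_of_lt, Finset.sum_empty, zero_add]
    gcongr
    omega
  | succ N ih =>
    rw [Finset.sum_Icc_succ_top (by omega)]
    rcases le_or_gt a (N + 1) with h | h
    · rw [show a - N - 1 = 0 by omega] at ih
      rw [Nat.sub_eq_zero_of_le h, show 0 - 1 = 0 by rfl]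
      simpa using ih
    · have h1 := inv_sqrt_succ_le (a - N - 2)
      rw [show a - N - 2 + 1 = a - N - 1 by omega] at h1
      rw [show a - (N + 1) - 1 = a - N - 2 by omega, show a - (N + 1) = a - N - 1 by omega]
      linarith

theorem sum_Icc_ite_dvd (q N : ℕ) (hq : 0 < q) (f : ℕ → ℝ) :
    ∑ c ∈ Finset.Icc 1 N, (if q ∣ c then f c else 0) = ∑ m ∈ Finset.Icc 1 (N / q), f (q * m) := by
  rw [← Finset.sum_filter]
  symm
  refine Finset.sum_bij (fun m _ => q * m) ?_ ?_ ?_ ?_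
  · intro m hm
    rw [Finset.mem_Icc, Nat.le_div_iff_mul_le hq] at hm
    rw [Finset.mem_filter, Finset.mem_Icc]
    exact ⟨⟨Nat.mul_pos hq hm.1, by linarith [mul_comm m q]⟩, dvd_mul_right q m⟩
  · intro m _ n _ h
    exact Nat.eq_of_mul_eq_mul_left hq h
  · intro c hc
    rw [Finset.mem_filter, Finset.mem_Icc] at hc
    obtain ⟨⟨h1, h2⟩, m, rfl⟩ := hc
    refine ⟨m, ?_, rfl⟩
    rw [Finset.mem_Icc, Nat.le_div_iff_mul_le hq]
    exact ⟨Nat.pos_of_mul_pos_left h1, by linarith [mul_comm m q]⟩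
  · intro m _
    rfl

/-- The majorant of the Bessel function `J_κ(x)` in the transition range. -/
noncomputable def besselMajorant (κ x : ℝ) : ℝ :=
  κ ^ (-(1 / 4 : ℝ)) * (|x - κ| + κ ^ ((1 : ℝ) / 3)) ^ (-(1 / 4 : ℝ))

theorem besselMajorant_nonneg {κ : ℝ} (hκ : 0 ≤ κ) (x : ℝ) : 0 ≤ besselMajorant κ x := by
  unfold besselMajorant
  positivity

theorem besselMajorant_le_one {κ : ℝ} (hκ : 1 ≤ κ) (x : ℝ) : besselMajorant κ x ≤ 1 := by
  have h1 : 1 ≤ κ ^ ((1 : ℝ) / 3) := Real.one_le_rpow hκ (by norm_num)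
  refine mul_le_one₀ (Real.rpow_le_one_of_one_le_of_nonpos hκ (by norm_num)) (by positivity)
    (Real.rpow_le_one_of_one_le_of_nonpos ?_ (by norm_num))
  linarith [abs_nonneg (x - κ)]

theorem inv_sqrt_mul_besselMajorant_le_of_dist {κ A : ℝ} (hκ : 1 ≤ κ) {m t : ℕ} (hm : 1 ≤ m)
    (ht : 1 ≤ t) (hd : (t : ℝ) ≤ |A / κ - m|) :
    (√(m : ℝ))⁻¹ * besselMajorant κ (A / m) ≤ (√κ)⁻¹ * ((√(m : ℝ))⁻¹ + (√(t : ℝ))⁻¹) := by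
  have hκ0 : 0 < κ := by linarith
  have hm0 : (0 : ℝ) < m := by exact_mod_cast hm
  have ht0 : (0 : ℝ) < t := by exact_mod_cast ht
  have h1 : κ * t / m ≤ |A / m - κ| := by
    have : A / m - κ = κ / m * (A / κ - m) := by field_simp
    rw [this, abs_mul, abs_of_pos (by positivity)]
    calc κ * t / m = κ / m * t := by ring
      _ ≤ _ := by gcongr
  have h2 : (|A / m - κ| + κ ^ ((1 : ℝ) / 3)) ^ (-(1 / 4 : ℝ)) ≤ (κ * t / m) ^ (-(1 / 4 : ℝ)) := by
    refine Real.rpow_le_rpow_of_nonpos (by positivity) ?_ (by norm_num)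
    have : 0 ≤ κ ^ ((1 : ℝ) / 3) := by positivity
    linarith
  have hsq : ∀ y : ℝ, 0 < y → (y ^ (-(1 / 4 : ℝ))) ^ 2 = (√y)⁻¹ := by
    intro y hy
    rw [← Real.rpow_natCast, ← Real.rpow_mul hy.le, Real.sqrt_eq_rpow, ← Real.rpow_neg hy.le]
    norm_num
  set u := (m : ℝ) ^ (-(1 / 4 : ℝ)) with hu
  set v := (t : ℝ) ^ (-(1 / 4 : ℝ)) with hv
  set w := κ ^ (-(1 / 4 : ℝ)) with hw
  have hu0 : 0 < u := by positivity
  have h3 : (κ * t / m) ^ (-(1 / 4 : ℝ)) = w * v / u := by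
    rw [Real.div_rpow (by positivity) hm0.le, Real.mul_rpow hκ0.le ht0.le]
  unfold besselMajorant
  rw [← hsq _ hm0, ← hsq _ ht0, ← hsq _ hκ0]
  calc u ^ 2 * (w * (|A / m - κ| + κ ^ ((1 : ℝ) / 3)) ^ (-(1 / 4 : ℝ)))
      ≤ u ^ 2 * (w * (w * v / u)) := by
        rw [← h3]
        gcongr
    _ = w ^ 2 * (u * v) := by field_simp
    _ ≤ w ^ 2 * (u ^ 2 + v ^ 2) := by
        gcongr
        nlinarith [sq_nonneg (u - v), sq_nonneg u, sq_nonneg v]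

theorem inv_sqrt_mul_besselMajorant_le {κ A : ℝ} (hκ : 1 ≤ κ) (hA : 0 ≤ A) {m : ℕ} (hm : 1 ≤ m) :
    (√(m : ℝ))⁻¹ * besselMajorant κ (A / m) ≤
      (if m = ⌊A / κ⌋₊ then 1 else 0) + (if m = ⌊A / κ⌋₊ + 1 then 1 else 0) +
        (√κ)⁻¹ * ((√(m : ℝ))⁻¹ + (√((m - (⌊A / κ⌋₊ + 1) : ℕ) : ℝ))⁻¹ +
          (√((⌊A / κ⌋₊ - m : ℕ) : ℝ))⁻¹) := by
  have hA' : 0 ≤ A / κ := by positivity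
  have hlow := Nat.floor_le hA'
  have hup := Nat.lt_floor_add_one (A / κ)
  set n := ⌊A / κ⌋₊
  have hnn : 0 ≤ (√κ)⁻¹ * ((√(m : ℝ))⁻¹ + (√((m - (n + 1) : ℕ) : ℝ))⁻¹ +
      (√((n - m : ℕ) : ℝ))⁻¹) := by positivity
  have htriv : (√(m : ℝ))⁻¹ * besselMajorant κ (A / m) ≤ 1 := by
    refine mul_le_one₀ (inv_le_one_of_one_le₀ ?_) (besselMajorant_nonneg (by linarith) _)
      (besselMajorant_le_one hκ _)
    rw [Real.one_le_sqrt]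
    exact_mod_cast hm
  rcases lt_trichotomy m n with h | h | h
  · have := inv_sqrt_mul_besselMajorant_le_of_dist (A := A) (t := n - m) hκ hm (by omega) (by
      rw [Nat.cast_sub h.le]
      exact le_trans (by linarith) (le_abs_self _))
    refine this.trans ?_
    rw [if_neg (by omega), if_neg (by omega), Nat.sub_eq_zero_of_le (by omega : m ≤ n + 1)]
    simp
  · rw [if_pos h]
    split_ifs <;> linarith
  · rcases eq_or_ne m (n + 1) with h' | h'
    · rw [if_pos h']
      split_ifs <;> linarith
    · have := inv_sqrt_mul_besselMajorant_le_of_dist (A := A) (t := m - (n + 1)) hκ hm (by omega) (by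
        rw [Nat.cast_sub (by omega)]
        refine le_trans ?_ (neg_le_abs _)
        push_cast
        linarith)
      refine this.trans ?_
      rw [if_neg (by omega), if_neg (by omega), Nat.sub_eq_zero_of_le h.le]
      simp

theorem sum_inv_sqrt_mul_besselMajorant_le {κ A : ℝ} (hκ : 1 ≤ κ) (hA : 0 ≤ A) (M : ℕ) :
    ∑ m ∈ Finset.Icc 1 M, (√(m : ℝ))⁻¹ * besselMajorant κ (A / m) ≤
      2 + (√κ)⁻¹ * (4 * √(M : ℝ) + 2 * √(A / κ)) := by
  have hfl : √((⌊A / κ⌋₊ : ℕ) : ℝ) ≤ √(A / κ) :=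
    Real.sqrt_le_sqrt (Nat.floor_le (by positivity))
  have hind : ∀ n : ℕ, ∑ m ∈ Finset.Icc 1 M, (if m = n then (1 : ℝ) else 0) ≤ 1 := by
    intro n
    rw [Finset.sum_ite_eq']
    split_ifs <;> norm_num
  refine (Finset.sum_le_sum fun m hm =>
    inv_sqrt_mul_besselMajorant_le hκ hA (Finset.mem_Icc.1 hm).1).trans ?_
  rw [Finset.sum_add_distrib, Finset.sum_add_distrib, ← Finset.mul_sum, Finset.sum_add_distrib,
    Finset.sum_add_distrib]
  have h1 := sum_inv_sqrt_sub_le 0 M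
  simp only [Nat.sub_zero] at h1
  have h2 := sum_inv_sqrt_sub_le (⌊A / κ⌋₊ + 1) M
  have h3 := sum_inv_sqrt_sub_le' ⌊A / κ⌋₊ M
  have h4 : ∀ S T : ℝ, S ≤ T → (√κ)⁻¹ * S ≤ (√κ)⁻¹ * T := fun S T h => by gcongr
  exact add_le_add (by linarith [hind ⌊A / κ⌋₊, hind (⌊A / κ⌋₊ + 1)]) (h4 _ _ (by linarith))

/-- The contribution of the moduli divisible by `q`. -/
theorem sum_dvd_besselMajorant_le {k a q N : ℕ} (hk : 2 ≤ k) (hq : 0 < q)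
    (hN : (N : ℝ) ≤ 100 * a / k) :
    ∑ c ∈ Finset.Icc 1 N, (if q ∣ c then √(q : ℝ) * (√(c : ℝ))⁻¹ *
        besselMajorant ((k : ℝ) - 1 / 2) (Real.pi * a / c) else 0) ≤
      100 * (1 + √(a : ℝ) / k) := by
  have hk2 : (2 : ℝ) ≤ k := by exact_mod_cast hk
  have hq1 : (1 : ℝ) ≤ q := by exact_mod_cast hq
  have hq0 : (0 : ℝ) < q := by linarith
  set κ : ℝ := (k : ℝ) - 1 / 2 with hκ
  have hκk : (k : ℝ) / 2 ≤ κ := by linarith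
  have hκ1 : 1 ≤ κ := by linarith
  have hκ0 : 0 < κ := by linarith
  have hk0 : (0 : ℝ) < k := by linarith
  rw [sum_Icc_ite_dvd q N hq
    (fun c => √(q : ℝ) * (√(c : ℝ))⁻¹ * besselMajorant κ (Real.pi * a / c))]
  have hterm : ∀ m : ℕ, √(q : ℝ) * (√((q * m : ℕ) : ℝ))⁻¹ *
      besselMajorant κ (Real.pi * a / (q * m : ℕ)) =
      (√(m : ℝ))⁻¹ * besselMajorant κ (Real.pi * a / q / m) := by
    intro m
    have : 0 < √(q : ℝ) := Real.sqrt_pos.2 hq0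
    rw [Nat.cast_mul, Real.sqrt_mul hq0.le, div_div, mul_inv]
    field_simp
  simp only [hterm]
  refine (sum_inv_sqrt_mul_besselMajorant_le hκ1 (by positivity) _).trans ?_
  have hM : √((N / q : ℕ) : ℝ) ≤ 10 * (√(a : ℝ) / √(k : ℝ)) := by
    rw [← Real.sqrt_div (by positivity), show (10 : ℝ) = √100 by
      rw [show (100 : ℝ) = 10 ^ 2 by norm_num, Real.sqrt_sq (by norm_num)],
      ← Real.sqrt_mul (by norm_num)]
    refine Real.sqrt_le_sqrt ?_
    calc ((N / q : ℕ) : ℝ) ≤ N := by exact_mod_cast Nat.div_le_self N q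
      _ ≤ 100 * a / k := hN
      _ = 100 * (a / k) := by ring
  have hA : √(Real.pi * a / q / κ) ≤ 10 * (√(a : ℝ) / √(k : ℝ)) := by
    rw [← Real.sqrt_div (by positivity), show (10 : ℝ) = √100 by
      rw [show (100 : ℝ) = 10 ^ 2 by norm_num, Real.sqrt_sq (by norm_num)],
      ← Real.sqrt_mul (by norm_num)]
    refine Real.sqrt_le_sqrt ?_
    calc Real.pi * a / q / κ ≤ 4 * a / 1 / (k / 2) := by
          gcongr
          exact Real.pi_le_four
      _ = 8 * (a / k) := by field_simp; ring
      _ ≤ 100 * (a / k) := by gcongr; norm_num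
  have hinv : (√κ)⁻¹ ≤ 3 / 2 * (√(k : ℝ))⁻¹ := by
    rw [← div_eq_mul_inv, inv_le_comm₀ (Real.sqrt_pos.2 hκ0) (by positivity), inv_div]
    refine Real.le_sqrt_of_sq_le ?_
    rw [div_pow, Real.sq_sqrt hk0.le]
    exact le_trans (by gcongr; norm_num) hκk
  have hpos : 0 ≤ √(a : ℝ) / k := by positivity
  calc 2 + (√κ)⁻¹ * (4 * √((N / q : ℕ) : ℝ) + 2 * √(Real.pi * a / q / κ))
      ≤ 2 + 3 / 2 * (√(k : ℝ))⁻¹ *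
          (4 * (10 * (√(a : ℝ) / √(k : ℝ))) + 2 * (10 * (√(a : ℝ) / √(k : ℝ)))) := by gcongr
    _ = 2 + 90 * (√(a : ℝ) / (√(k : ℝ) * √(k : ℝ))) := by
        have : 0 < √(k : ℝ) := Real.sqrt_pos.2 hk0
        field_simp
        ring
    _ = 2 + 90 * (√(a : ℝ) / k) := by rw [Real.mul_self_sqrt hk0.le]
    _ ≤ 100 * (1 + √(a : ℝ) / k) := by linarith

/-- Summation over all moduli, weighted by the Salié-sum bound with the divisor function replaced
by a constant. -/
theorem sum_le_of_kloosterman_bound {k a N : ℕ} (hk : 2 ≤ k) (ha : a ≠ 0)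
    (hN : (N : ℝ) ≤ 100 * a / k) {f : ℕ → ℝ} {B : ℝ} (hB : 0 ≤ B)
    (hf : ∀ i l : ℕ, Odd l → 2 ^ i * l ∈ Finset.Icc 1 N →
      f (2 ^ i * l) ≤ B * (√((2 ^ i * Nat.gcd a l : ℕ) : ℝ) * (√((2 ^ i * l : ℕ) : ℝ))⁻¹ *
        besselMajorant ((k : ℝ) - 1 / 2) (Real.pi * a / (2 ^ i * l : ℕ)))) :
    ∑ c ∈ Finset.Icc 1 N, f c ≤
      B * (((Nat.log 2 N + 1) * a.divisors.card : ℕ) * (100 * (1 + √(a : ℝ) / k))) := by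
  have hk2 : (2 : ℝ) ≤ k := by exact_mod_cast hk
  have hκ : 0 ≤ (k : ℝ) - 1 / 2 := by linarith
  set G : ℕ → ℕ → ℝ := fun q c => if q ∣ c then √(q : ℝ) * (√(c : ℝ))⁻¹ *
    besselMajorant ((k : ℝ) - 1 / 2) (Real.pi * a / c) else 0 with hG
  have hGnn : ∀ q c, 0 ≤ G q c := by
    intro q c
    simp only [hG]
    split_ifs
    · exact mul_nonneg (by positivity) (besselMajorant_nonneg hκ _)
    · exact le_rfl
  set S := Finset.range (Nat.log 2 N + 1) ×ˢ a.divisors with hS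
  have hcS : S.card = (Nat.log 2 N + 1) * a.divisors.card := by simp [hS]
  have hpt : ∀ c ∈ Finset.Icc 1 N, f c ≤ B * ∑ p ∈ S, G (2 ^ p.1 * p.2) c := by
    intro c hc
    have hc' := Finset.mem_Icc.1 hc
    obtain ⟨i, l, hl, rfl⟩ := Nat.exists_eq_two_pow_mul_odd (show c ≠ 0 by omega)
    refine (hf i l hl hc).trans (mul_le_mul_of_nonneg_left ?_ hB)
    have hi : i ≤ Nat.log 2 N :=
      Nat.le_log_of_pow_le one_lt_two
        ((Nat.le_of_dvd (by omega) (dvd_mul_right _ _)).trans hc'.2)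
    have hmem : (i, Nat.gcd a l) ∈ S := by
      rw [hS, Finset.mem_product, Finset.mem_range, Nat.mem_divisors]
      exact ⟨by omega, Nat.gcd_dvd_left a l, ha⟩
    refine le_trans (le_of_eq ?_) (Finset.single_le_sum
      (f := fun p : ℕ × ℕ => G (2 ^ p.1 * p.2) (2 ^ i * l)) (fun p _ => hGnn _ _) hmem)
    simp only [hG]
    rw [if_pos (Nat.mul_dvd_mul_left _ (Nat.gcd_dvd_right a l))]
  calc ∑ c ∈ Finset.Icc 1 N, f c
      ≤ ∑ c ∈ Finset.Icc 1 N, B * ∑ p ∈ S, G (2 ^ p.1 * p.2) c := Finset.sum_le_sum hpt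
    _ = B * ∑ p ∈ S, ∑ c ∈ Finset.Icc 1 N, G (2 ^ p.1 * p.2) c := by
        rw [← Finset.mul_sum, Finset.sum_comm]
    _ ≤ B * ∑ _p ∈ S, 100 * (1 + √(a : ℝ) / k) := by
        gcongr with p hp
        have hp2 : 0 < p.2 := Nat.pos_of_mem_divisors (Finset.mem_product.1 hp).2
        exact sum_dvd_besselMajorant_le hk (by positivity) hN
    _ = _ := by rw [Finset.sum_const, nsmul_eq_mul, hcS]

/-- Trivial summation over `c` of the generalized Kloosterman sums `H_c(|D|,|D|)`
against the Bessel function `J_{k−1/2}(π|D|/c)`: under the Salié-sum bound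
`|H_c| ≤ 2^{ν+2} d(l) √l gcd(|D|,l)^{1/2}` (for `c = 2^ν l`, `l` odd) and the Bessel
transition bound `J_ν(x) ≪ ν^{−1/4}(|x−ν|+ν^{1/3})^{−1/4}` for `x ≫ ν`, one has
`Σ_{c ≤ 100|D|/k} c⁻¹ |H_c| |J_{k−1/2}(π|D|/c)| ≪ (1 + √|D|/k)(k|D|)^ε`. -/
theorem kohnen_sengupta_sum_bound (ε : ℝ) (hε : 0 < ε) :
    ∃ C : ℝ, 0 < C ∧
      ∀ (k : ℕ) (D : ℤ) (Hc : ℕ → ℂ) (J : ℝ → ℝ → ℝ) (CJ : ℝ),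
        2 ≤ k → D ≠ 0 → 0 ≤ CJ →
        (∀ ν l : ℕ, Odd l →
          ‖Hc (2 ^ ν * l)‖
            ≤ 2 ^ (ν + 2) * (l.divisors.card : ℝ) * Real.sqrt l *
                Real.sqrt (Nat.gcd D.natAbs l)) →
        (∀ ν x : ℝ, 1 ≤ ν → ν / 100 ≤ x →
          |J ν x| ≤ CJ * ν ^ (-(1 / 4 : ℝ)) * (|x - ν| + ν ^ ((1 : ℝ) / 3)) ^ (-(1 / 4 : ℝ))) →
        ∑ c ∈ Finset.Icc 1 (Nat.floor (100 * |(D : ℝ)| / k)),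
            (c : ℝ)⁻¹ * ‖Hc c‖ * |J ((k : ℝ) - 1 / 2) (Real.pi * |(D : ℝ)| / c)|
          ≤ C * (CJ + 1) * (1 + Real.sqrt |(D : ℝ)| / k) * ((k : ℝ) * |(D : ℝ)|) ^ ε := by
  obtain ⟨K, hK1, hK⟩ := exists_card_divisors_le_mul_rpow (ε / 3) (by positivity)
  have hK0 : 0 < K := by linarith
  refine ⟨400 * K ^ 3 * (50 : ℝ) ^ (ε / 3) * (50 : ℝ) ^ (ε / 3), by positivity, ?_⟩
  intro k D Hc J CJ hk hD hCJ hH hJ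
  have hk2 : (2 : ℝ) ≤ k := by exact_mod_cast hk
  have hk0 : (0 : ℝ) < k := by linarith
  have haD : |(D : ℝ)| = (D.natAbs : ℝ) := by
    rw [Nat.cast_natAbs, Int.cast_abs]
  have ha : D.natAbs ≠ 0 := Int.natAbs_ne_zero.2 hD
  rw [haD]
  generalize D.natAbs = a at *
  have ha1 : (1 : ℝ) ≤ a := by exact_mod_cast Nat.one_le_iff_ne_zero.2 ha
  have ha0 : (0 : ℝ) < a := by linarith
  set N : ℕ := ⌊100 * (a : ℝ) / k⌋₊ with hNdef
  have hN : (N : ℝ) ≤ 100 * a / k := Nat.floor_le (by positivity)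
  have hN50 : (N : ℝ) ≤ 50 * a := by
    refine hN.trans ?_
    rw [div_le_iff₀ hk0]
    nlinarith
  have hdiv : ∀ l : ℕ, l ≠ 0 → (l : ℝ) ≤ 50 * a →
      (l.divisors.card : ℝ) ≤ K * ((50 : ℝ) ^ (ε / 3) * (a : ℝ) ^ (ε / 3)) := by
    intro l hl hle
    refine (hK l hl).trans ?_
    rw [← Real.mul_rpow (by norm_num) ha0.le]
    gcongr
  have hlog : ((Nat.log 2 N + 1 : ℕ) : ℝ) ≤ K * ((50 : ℝ) ^ (ε / 3) * (a : ℝ) ^ (ε / 3)) := by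
    have hcard : (2 ^ Nat.log 2 N).divisors.card = Nat.log 2 N + 1 := by
      rw [Nat.divisors_prime_pow Nat.prime_two]
      simp
    rw [← hcard]
    refine hdiv _ (by positivity) ?_
    rcases eq_or_ne N 0 with h0 | h0
    · rw [h0]
      norm_num
      linarith
    · exact le_trans (by exact_mod_cast Nat.pow_log_le_self 2 h0) hN50
  set E : ℝ := (50 : ℝ) ^ (ε / 3) * (a : ℝ) ^ (ε / 3) with hE
  have hE0 : 0 < E := by positivity
  have hsum := sum_le_of_kloosterman_bound (f := fun c => (c : ℝ)⁻¹ * ‖Hc c‖ *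
      |J ((k : ℝ) - 1 / 2) (Real.pi * a / c)|) hk ha hN
      (B := 4 * (K * E) * CJ) (by positivity) (by
    intro i l hl hmem
    have hmem' := Finset.mem_Icc.1 hmem
    have hl0 : 0 < l := hl.pos
    have hl0' : (0 : ℝ) < l := by exact_mod_cast hl0
    have hcN : ((2 ^ i * l : ℕ) : ℝ) ≤ 100 * a / k :=
      le_trans (by exact_mod_cast hmem'.2) hN
    have hc0 : (0 : ℝ) < (2 ^ i * l : ℕ) := by exact_mod_cast hmem'.1
    have hlN : (l : ℝ) ≤ 50 * a :=
      le_trans (by exact_mod_cast (Nat.le_of_dvd (by omega) (dvd_mul_left _ _)).trans hmem'.2) hN50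
    have hJ' : |J ((k : ℝ) - 1 / 2) (Real.pi * a / (2 ^ i * l : ℕ))| ≤
        CJ * besselMajorant ((k : ℝ) - 1 / 2) (Real.pi * a / (2 ^ i * l : ℕ)) := by
      unfold besselMajorant
      rw [← mul_assoc]
      refine hJ _ _ (by linarith) ?_
      rw [le_div_iff₀ hc0]
      calc ((k : ℝ) - 1 / 2) / 100 * (2 ^ i * l : ℕ) ≤ k / 100 * (100 * a / k) := by
            gcongr
            linarith
        _ = 1 * a := by field_simp
        _ ≤ Real.pi * a := by
            gcongr
            linarith [Real.pi_gt_three]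
    have hH' : ((2 ^ i * l : ℕ) : ℝ)⁻¹ * ‖Hc (2 ^ i * l)‖ ≤
        4 * (K * E) * (√((2 ^ i * Nat.gcd a l : ℕ) : ℝ) * (√((2 ^ i * l : ℕ) : ℝ))⁻¹) := by
      have h2 : (0 : ℝ) < 2 ^ i := by positivity
      have hs2 : 0 < √((2 : ℝ) ^ i) := Real.sqrt_pos.2 h2
      have hsl : 0 < √(l : ℝ) := Real.sqrt_pos.2 hl0'
      have hll : √(l : ℝ) * √(l : ℝ) = l := Real.mul_self_sqrt hl0'.le
      have heq : ((2 ^ i * l : ℕ) : ℝ)⁻¹ *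
          (2 ^ (i + 2) * (l.divisors.card : ℝ) * √(l : ℝ) * √(Nat.gcd a l : ℝ)) =
          4 * (l.divisors.card : ℝ) *
            (√((2 ^ i * Nat.gcd a l : ℕ) : ℝ) * (√((2 ^ i * l : ℕ) : ℝ))⁻¹) := by
        push_cast
        rw [Real.sqrt_mul h2.le, Real.sqrt_mul h2.le]
        nth_rewrite 1 [← hll]
        field_simp
        ring
      calc ((2 ^ i * l : ℕ) : ℝ)⁻¹ * ‖Hc (2 ^ i * l)‖
          ≤ ((2 ^ i * l : ℕ) : ℝ)⁻¹ *
            (2 ^ (i + 2) * (l.divisors.card : ℝ) * √(l : ℝ) * √(Nat.gcd a l : ℝ)) := by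
              gcongr
              exact hH i l hl
        _ = _ := heq
        _ ≤ _ := by
          gcongr
          exact hdiv l hl0.ne' hlN
    calc ((2 ^ i * l : ℕ) : ℝ)⁻¹ * ‖Hc (2 ^ i * l)‖ *
          |J ((k : ℝ) - 1 / 2) (Real.pi * a / (2 ^ i * l : ℕ))|
        ≤ 4 * (K * E) * (√((2 ^ i * Nat.gcd a l : ℕ) : ℝ) * (√((2 ^ i * l : ℕ) : ℝ))⁻¹) *
          (CJ * besselMajorant ((k : ℝ) - 1 / 2) (Real.pi * a / (2 ^ i * l : ℕ))) := by
            gcongr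
      _ = _ := by ring)
  refine hsum.trans ?_
  have hX : 0 ≤ √(a : ℝ) / k := by positivity
  have hpow : (a : ℝ) ^ (ε / 3) * (a : ℝ) ^ (ε / 3) * (a : ℝ) ^ (ε / 3) = (a : ℝ) ^ ε := by
    rw [← Real.rpow_add ha0, ← Real.rpow_add ha0]
    congr 1
    ring
  push_cast at hlog ⊢
  calc 4 * (K * E) * CJ * ((((Nat.log 2 N : ℝ) + 1) * (a.divisors.card : ℝ)) *
        (100 * (1 + √(a : ℝ) / k)))
      ≤ 4 * (K * E) * (CJ + 1) * ((K * E) * (K * (a : ℝ) ^ (ε / 3)) *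
        (100 * (1 + √(a : ℝ) / k))) := by
          gcongr
          · linarith
          · exact hK a ha
    _ = 400 * K ^ 3 * (50 : ℝ) ^ (ε / 3) * (50 : ℝ) ^ (ε / 3) * (CJ + 1) *
        (1 + √(a : ℝ) / k) *
          ((a : ℝ) ^ (ε / 3) * (a : ℝ) ^ (ε / 3) * (a : ℝ) ^ (ε / 3)) := by
        rw [hE]
        ring
    _ ≤ 400 * K ^ 3 * (50 : ℝ) ^ (ε / 3) * (50 : ℝ) ^ (ε / 3) * (CJ + 1) *
        (1 + √(a : ℝ) / k) * ((k : ℝ) * a) ^ ε := by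
        rw [hpow]
        gcongr
        nlinarith
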